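/- arXiv:1711.02724 — 7 statements merged into one kernel-verified Lean document; each statement's English description precedes it below -/
import Mathlib

section
/- Let f : ℝ → ℝ be twice differentiable on [0,1] with 0 ≤ f(x) ≤ 1 for all x ∈ [0,1]. Then the function x ↦ log(1 − t·f(x)) is convex on [0,1] for every t ∈ (0,1) if and only if (1 − f(x))·(−f''(x)) ≥ (f'(x))² for all x ∈ [0,1]. -/
/-! For positive `h`, the second derivative of `log h` is `(h'' * h - h' ^ 2) / h ^ 2`, so `log h`
is convex iff `h' ^ 2 ≤ h'' * h`. For `h = 1 - t * f` this reads
`(t * f') ^ 2 ≤ -(t * f'') * (1 - t * f)`, and letting `t → 1` gives `f' ^ 2 ≤ (1 - f) * -f''`.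
Conversely, the inequality at `t = 1` implies the one at every `t ∈ (0, 1)` wherever `f'' ≤ 0`, and
it forces `f'' ≤ 0` in the interior: directly where `f < 1`, and because `f` has a local maximum
where `f = 1`. -/

open Set Filter Topology

section SecondDerivative

variable {s : Set ℝ} {f f' : ℝ → ℝ} {x f'' : ℝ}

theorem second_deriv_nonneg_of_convexOn (hs : UniqueDiffOn ℝ s) (hfc : ConvexOn ℝ s f)
    (hf : ∀ y ∈ s, HasDerivWithinAt f (f' y) s y) (hf' : HasDerivWithinAt f' f'' s x)
    (hx : x ∈ s) : 0 ≤ f'' := by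
  have hmono : MonotoneOn f' s :=
    (hfc.monotoneOn_derivWithin fun y hy => (hf y hy).differentiableWithinAt).congr
      fun y hy => (hf y hy).derivWithin (hs y hy)
  exact hf'.derivWithin (hs x hx) ▸ hmono.derivWithin_nonneg

theorem second_deriv_nonpos_of_isLocalMax (hmax : IsLocalMax f x)
    (hf : ∀ᶠ y in 𝓝 x, HasDerivAt f (f' y) y) (hf' : HasDerivAt f' f'' x) : f'' ≤ 0 := by
  have hderiv : deriv f =ᶠ[𝓝 x] f' := hf.mono fun y hy => hy.deriv
  have hderiv2 : deriv (deriv f) x = f'' := hderiv.deriv_eq.trans hf'.deriv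
  by_contra! hpos
  -- By the second derivative test `x` is also a local minimum, so `f` is constant near `x`.
  have hmin : IsLocalMin f x :=
    isLocalMin_of_deriv_deriv_pos (hderiv2.symm ▸ hpos) hmax.deriv_eq_zero
      hf.self_of_nhds.continuousAt
  have hconst : f =ᶠ[𝓝 x] fun _ => f x := by
    filter_upwards [hmax, hmin] with y hle hge using le_antisymm hle hge
  have hzero : deriv (deriv f) x = 0 := hconst.deriv.deriv_eq.trans (by simp)
  exact hpos.ne' (hderiv2.symm.trans hzero)

theorem second_deriv_nonpos_of_sq_le_mul {M : ℝ} (hM : ∀ᶠ y in 𝓝 x, f y ≤ M)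
    (hf : ∀ᶠ y in 𝓝 x, HasDerivAt f (f' y) y) (hf' : HasDerivAt f' f'' x)
    (hle : f' x ^ 2 ≤ (M - f x) * -f'') : f'' ≤ 0 := by
  rcases hM.self_of_nhds.lt_or_eq with hlt | heq
  · have hnonneg : 0 ≤ (M - f x) * -f'' := (sq_nonneg _).trans hle
    exact neg_nonneg.mp (nonneg_of_mul_nonneg_right hnonneg (sub_pos.mpr hlt))
  · have hmax : IsLocalMax f x := hM.mono fun y hy => hy.trans_eq heq.symm
    exact second_deriv_nonpos_of_isLocalMax hmax hf hf'

end SecondDerivative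

section LogConvex

variable {s : Set ℝ} {h h' : ℝ → ℝ}

theorem sq_le_mul_of_convexOn_log {x h'' : ℝ} (hs : UniqueDiffOn ℝ s) (hpos : ∀ y ∈ s, 0 < h y)
    (hh : ∀ y ∈ s, HasDerivWithinAt h (h' y) s y) (hh' : HasDerivWithinAt h' h'' s x)
    (hconv : ConvexOn ℝ s fun y => Real.log (h y)) (hx : x ∈ s) : h' x ^ 2 ≤ h'' * h x := by
  have hnonneg : 0 ≤ (h'' * h x - h' x * h' x) / h x ^ 2 :=
    second_deriv_nonneg_of_convexOn hs hconv (fun y hy => (hh y hy).log (hpos y hy).ne')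
      (hh'.fun_div (hh x hx) (hpos x hx).ne') hx
  rwa [le_div_iff₀ (pow_pos (hpos x hx) 2), zero_mul, sub_nonneg, ← sq] at hnonneg

theorem convexOn_log_of_sq_le_mul {h'' : ℝ → ℝ} (hs : Convex ℝ s) (hpos : ∀ x ∈ s, 0 < h x)
    (hcont : ContinuousOn h s) (hh : ∀ x ∈ interior s, HasDerivAt h (h' x) x)
    (hh' : ∀ x ∈ interior s, HasDerivAt h' (h'' x) x)
    (hle : ∀ x ∈ interior s, h' x ^ 2 ≤ h'' x * h x) :
    ConvexOn ℝ s fun x => Real.log (h x) := by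
  have hne : ∀ x ∈ interior s, h x ≠ 0 := fun x hx => (hpos x (interior_subset hx)).ne'
  refine convexOn_of_hasDerivWithinAt2_nonneg hs (hcont.log fun x hx => (hpos x hx).ne')
    (fun x hx => ((hh x hx).log (hne x hx)).hasDerivWithinAt)
    (fun x hx => ((hh' x hx).fun_div (hh x hx) (hne x hx)).hasDerivWithinAt) fun x hx => ?_
  exact div_nonneg (sub_nonneg.mpr (sq (h' x) ▸ hle x hx)) (sq_nonneg _)

end LogConvex

section Parameter

variable {t a b c : ℝ}

theorem one_sub_mul_pos (ht : t ∈ Ioo (0 : ℝ) 1) (ha : a ≤ 1) : 0 < 1 - t * a :=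
  sub_pos.mpr ((mul_le_of_le_one_right ht.1.le ha).trans_lt ht.2)

theorem sq_le_one_sub_mul_of_forall_Ioo
    (hle : ∀ t ∈ Ioo (0 : ℝ) 1, (-(t * b)) ^ 2 ≤ -(t * c) * (1 - t * a)) :
    b ^ 2 ≤ (1 - a) * -c := by
  have hone : (1 : ℝ) ∈ closure (Ioo 0 1) := by simp [closure_Ioo]
  have hlim : (-(1 * b)) ^ 2 ≤ -(1 * c) * (1 - 1 * a) :=
    le_on_closure hle (by fun_prop) (by fun_prop) hone
  linarith

theorem sq_neg_mul_le_of_sq_le (ht : t ∈ Ioo (0 : ℝ) 1) (hc : c ≤ 0)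
    (hle : b ^ 2 ≤ (1 - a) * -c) : (-(t * b)) ^ 2 ≤ -(t * c) * (1 - t * a) :=
  calc (-(t * b)) ^ 2 = t ^ 2 * b ^ 2 := by ring
    _ ≤ t ^ 2 * ((1 - a) * -c) := by gcongr
    _ = -(t * c) * (t - t * a) := by ring
    _ ≤ -(t * c) * (1 - t * a) := by
      have : 0 ≤ -(t * c) := neg_nonneg.mpr (mul_nonpos_of_nonneg_of_nonpos ht.1.le hc)
      gcongr
      exact ht.2.le

end Parameter

theorem convexOn_log_one_sub_mul_iff_general {s : Set ℝ} {f f' f'' : ℝ → ℝ}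
    (hs : Convex ℝ s) (hs' : UniqueDiffOn ℝ s)
    (hf : ∀ x ∈ s, HasDerivWithinAt f (f' x) s x)
    (hf' : ∀ x ∈ s, HasDerivWithinAt f' (f'' x) s x) (hf1 : ∀ x ∈ s, f x ≤ 1) :
    (∀ t ∈ Ioo (0 : ℝ) 1, ConvexOn ℝ s fun x => Real.log (1 - t * f x)) ↔
      ∀ x ∈ s, f' x ^ 2 ≤ (1 - f x) * -f'' x := by
  have hpos : ∀ t ∈ Ioo (0 : ℝ) 1, ∀ x ∈ s, 0 < 1 - t * f x :=
    fun t ht x hx => one_sub_mul_pos ht (hf1 x hx)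
  have hh (t x : ℝ) (hx : x ∈ s) :
      HasDerivWithinAt (fun y => 1 - t * f y) (-(t * f' x)) s x :=
    ((hf x hx).const_mul t).const_sub 1
  have hh' (t x : ℝ) (hx : x ∈ s) :
      HasDerivWithinAt (fun y => -(t * f' y)) (-(t * f'' x)) s x :=
    ((hf' x hx).const_mul t).fun_neg
  constructor
  · exact fun hconv x hx => sq_le_one_sub_mul_of_forall_Ioo fun t ht =>
      sq_le_mul_of_convexOn_log hs' (hpos t ht) (hh t) (hh' t x hx) (hconv t ht) hx
  · intro hle t ht
    have hnhds : ∀ x ∈ interior s, s ∈ 𝓝 x := fun x hx => mem_interior_iff_mem_nhds.mp hx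
    have hnonpos : ∀ x ∈ interior s, f'' x ≤ 0 := fun x hx =>
      second_deriv_nonpos_of_sq_le_mul (eventually_of_mem (hnhds x hx) hf1)
        ((eventually_mem_nhds_iff.mpr (hnhds x hx)).mono fun y hy =>
          (hf y (mem_of_mem_nhds hy)).hasDerivAt hy)
        ((hf' x (interior_subset hx)).hasDerivAt (hnhds x hx)) (hle x (interior_subset hx))
    exact convexOn_log_of_sq_le_mul hs (hpos t ht) (fun x hx => (hh t x hx).continuousWithinAt)
      (fun x hx => (hh t x (interior_subset hx)).hasDerivAt (hnhds x hx))
      (fun x hx => (hh' t x (interior_subset hx)).hasDerivAt (hnhds x hx))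
      fun x hx => sq_neg_mul_le_of_sq_le ht (hnonpos x hx) (hle x (interior_subset hx))

/-- For `f : ℝ → ℝ` twice differentiable on `[0,1]` with values in `[0,1]`,
the function `x ↦ log (1 - t * f x)` is convex on `[0,1]` for every `t ∈ (0,1)`
iff `(1 - f x) * (-f'' x) ≥ (f' x)^2` for all `x ∈ [0,1]`. -/
theorem convexOn_log_one_sub_mul_iff
    (f : ℝ → ℝ)
    (hf : ∀ x ∈ Set.Icc (0:ℝ) 1, DifferentiableAt ℝ f x)
    (hf' : ∀ x ∈ Set.Icc (0:ℝ) 1, DifferentiableAt ℝ (deriv f) x)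
    (hf0 : ∀ x ∈ Set.Icc (0:ℝ) 1, 0 ≤ f x)
    (hf1 : ∀ x ∈ Set.Icc (0:ℝ) 1, f x ≤ 1) :
    (∀ t ∈ Set.Ioo (0:ℝ) 1,
        ConvexOn ℝ (Set.Icc (0:ℝ) 1) (fun x => Real.log (1 - t * f x)))
      ↔ (∀ x ∈ Set.Icc (0:ℝ) 1,
          (1 - f x) * (-(deriv (deriv f) x)) ≥ (deriv f x) ^ 2) :=
  convexOn_log_one_sub_mul_iff_general (convex_Icc 0 1) uniqueDiffOn_Icc_zero_one
    (fun x hx => (hf x hx).hasDerivAt.hasDerivWithinAt)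
    (fun x hx => (hf' x hx).hasDerivAt.hasDerivWithinAt) hf1
end

section
/- Let g : ℝ → ℝ be defined by g(x) = x·(1 − x/2). Then for every t ∈ (0,1), the function x ↦ log(1 − t·g(x)) is convex on the interval [0,1]. -/
/-!
A positive function `f` has convex logarithm as soon as `f' ^ 2 ≤ f * f''`, since
`(log f)'' = (f * f'' - f' ^ 2) / f ^ 2`. For `f u = c + a * u ^ 2` this condition reads
`a * u ^ 2 ≤ c`. Completing the square,
`1 - t * (x * (1 - x / 2)) = (1 - t / 2) + t / 2 * (x - 1) ^ 2`,
so the logarithm is convex where `t * (x - 1) ^ 2 ≤ 2 - t`, which for `t ≤ 1` holds on `[0, 1]`.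
-/

theorem convexOn_log_of_sq_deriv_le_mul {D : Set ℝ} (hD : Convex ℝ D) {f f' f'' : ℝ → ℝ}
    (hf : ContinuousOn f D) (hpos : ∀ x ∈ D, 0 < f x)
    (hf' : ∀ x ∈ interior D, HasDerivWithinAt f (f' x) (interior D) x)
    (hf'' : ∀ x ∈ interior D, HasDerivWithinAt f' (f'' x) (interior D) x)
    (hle : ∀ x ∈ interior D, f' x ^ 2 ≤ f x * f'' x) :
    ConvexOn ℝ D (fun x => Real.log (f x)) := by
  have hne : ∀ x ∈ D, f x ≠ 0 := fun x hx => (hpos x hx).ne'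
  have hlog' : ∀ x ∈ interior D,
      HasDerivWithinAt (fun x => Real.log (f x)) (f' x / f x) (interior D) x :=
    fun x hx => (hf' x hx).log (hne x (interior_subset hx))
  have hlog'' : ∀ x ∈ interior D,
      HasDerivWithinAt (fun x => f' x / f x) ((f'' x * f x - f' x * f' x) / f x ^ 2)
        (interior D) x :=
    fun x hx => (hf'' x hx).div (hf' x hx) (hne x (interior_subset hx))
  refine convexOn_of_hasDerivWithinAt2_nonneg hD (hf.log hne) hlog' hlog'' fun x hx => ?_
  exact div_nonneg (by linarith [hle x hx]) (sq_nonneg (f x))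

theorem convex_setOf_mul_pow_le {𝕜 : Type*} [CommRing 𝕜] [LinearOrder 𝕜] [IsStrictOrderedRing 𝕜]
    {n : ℕ} (hn : Even n) {a : 𝕜} (ha : 0 ≤ a) (c : 𝕜) : Convex 𝕜 {u : 𝕜 | a * u ^ n ≤ c} := by
  simpa only [Set.mem_univ, true_and, smul_eq_mul] using (hn.convexOn_pow.smul ha).convex_le c

theorem convexOn_log_add_mul_sq {a c : ℝ} (ha : 0 ≤ a) (hc : 0 < c) :
    ConvexOn ℝ {u : ℝ | a * u ^ 2 ≤ c} (fun u => Real.log (c + a * u ^ 2)) := by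
  have hderiv (u : ℝ) : HasDerivAt (fun u => c + a * u ^ 2) (2 * a * u) u :=
    (((hasDerivAt_pow 2 u).const_mul a).const_add c).congr_deriv (by ring)
  have hderiv2 (u : ℝ) : HasDerivAt (fun u => 2 * a * u) (2 * a) u :=
    hasDerivAt_const_mul (2 * a)
  refine convexOn_log_of_sq_deriv_le_mul (convex_setOf_mul_pow_le even_two ha c) (by fun_prop)
    (fun u _ => by positivity) (fun u _ => (hderiv u).hasDerivWithinAt)
    (fun u _ => (hderiv2 u).hasDerivWithinAt) fun u hu => ?_
  have hu_le : u ∈ {u : ℝ | a * u ^ 2 ≤ c} := interior_subset hu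
  rw [Set.mem_ofPred_eq] at hu_le
  calc (2 * a * u) ^ 2 = 2 * a * (a * u ^ 2 + a * u ^ 2) := by ring
    _ ≤ 2 * a * (c + a * u ^ 2) := by gcongr
    _ = (c + a * u ^ 2) * (2 * a) := mul_comm _ _

theorem convexOn_log_one_sub_mul_g_general
    (g : ℝ → ℝ) (hg : ∀ x, g x = x * (1 - x / 2)) :
    ∀ t ∈ Set.Ico (0 : ℝ) 2,
      ConvexOn ℝ {x : ℝ | t * (x - 1) ^ 2 ≤ 2 - t} (fun x => Real.log (1 - t * g x)) := by
  rintro t ⟨ht0, ht2⟩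
  have hset : {x : ℝ | t * (x - 1) ^ 2 ≤ 2 - t} =
      (fun x => -1 + x) ⁻¹' {u : ℝ | t / 2 * u ^ 2 ≤ 1 - t / 2} := by
    ext x
    simp only [Set.mem_ofPred_eq, Set.mem_preimage, neg_add_eq_sub]
    constructor <;> intro h <;> linarith
  have hsquare (x : ℝ) : 1 - t * g x = 1 - t / 2 + t / 2 * (-1 + x) ^ 2 := by
    rw [hg]
    ring
  simp only [hset, hsquare]
  have ha : 0 ≤ t / 2 := by linarith
  have hc : 0 < 1 - t / 2 := by linarith
  exact (convexOn_log_add_mul_sq ha hc).translate_right (-1)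

/-- For `g x = x * (1 - x/2)` and any `t ∈ (0,1)`, the function
`x ↦ log (1 - t * g x)` is convex on `[0,1]`. -/
theorem convexOn_log_one_sub_mul_g
    (g : ℝ → ℝ) (hg : ∀ x, g x = x * (1 - x / 2)) :
    ∀ t ∈ Set.Ioo (0:ℝ) 1,
      ConvexOn ℝ (Set.Icc (0:ℝ) 1) (fun x => Real.log (1 - t * g x)) := by
  rintro t ⟨ht0, ht1⟩
  have hsub : Set.Icc (0 : ℝ) 1 ⊆ {x : ℝ | t * (x - 1) ^ 2 ≤ 2 - t} :=
    fun x ⟨hx0, hx1⟩ => show t * (x - 1) ^ 2 ≤ 2 - t by nlinarith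
  exact (convexOn_log_one_sub_mul_g_general g hg t ⟨ht0.le, by linarith⟩).subset hsub
    (convex_Icc 0 1)
end

section
/- Let k ≥ 1 be an integer, let α ∈ (0,1] be a real number, let V be a finite set with |V| = k, and for each v ∈ V let F_v be a finite index set with reals x_{v,f} ∈ [0,1] for f ∈ F_v satisfying ∑_{f ∈ F_v} x_{v,f} ≤ 1. Then ∫_0^1 ∏_{v ∈ V} ∏_{f ∈ F_v} (1 − t·α·x_{v,f}) dt ≥ (1 − (1−α)^{k+1}) / (α(k+1)). In particular, when α = 1 the integral is at least 1/(k+1). -/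
/-!
Writing `c = t * α ∈ [0, 1]`, the Weierstrass product inequality bounds the factor of each vertex
`v` below by `1 - c * ∑ f ∈ F v, x v f ≥ 1 - c`, so the integrand is at least `(1 - α * t) ^ k`,
whose integral is computed exactly.
-/

section OrderedRing

variable {ι κ R : Type*} [CommRing R] [PartialOrder R] [IsOrderedRing R]

theorem one_sub_sum_le_prod_one_sub (s : Finset ι) (f : ι → R) (hf₀ : ∀ i ∈ s, 0 ≤ f i)
    (hf₁ : ∀ i ∈ s, f i ≤ 1) : 1 - ∑ i ∈ s, f i ≤ ∏ i ∈ s, (1 - f i) := by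
  induction s using Finset.cons_induction with
  | empty => simp
  | cons a s ha ih =>
    rw [Finset.forall_mem_cons] at hf₀ hf₁
    have prod_le_one : ∏ i ∈ s, (1 - f i) ≤ 1 :=
      Finset.prod_le_one (fun i hi ↦ sub_nonneg.2 (hf₁.2 i hi))
        fun i hi ↦ sub_le_self 1 (hf₀.2 i hi)
    rw [Finset.sum_cons, Finset.prod_cons]
    calc 1 - (f a + ∑ i ∈ s, f i) = 1 - ∑ i ∈ s, f i - f a := by ring
      _ ≤ ∏ i ∈ s, (1 - f i) - f a * ∏ i ∈ s, (1 - f i) :=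
        sub_le_sub (ih hf₀.2 hf₁.2) (mul_le_of_le_one_right hf₀.1 prod_le_one)
      _ = (1 - f a) * ∏ i ∈ s, (1 - f i) := by ring

theorem one_sub_le_prod_one_sub_mul {c : R} (hc₀ : 0 ≤ c) (hc₁ : c ≤ 1) (s : Finset ι) (f : ι → R)
    (hf : ∀ i ∈ s, 0 ≤ f i) (hsum : ∑ i ∈ s, f i ≤ 1) : 1 - c ≤ ∏ i ∈ s, (1 - c * f i) := by
  have le_one : ∀ i ∈ s, f i ≤ 1 := fun i hi ↦ (Finset.single_le_sum hf hi).trans hsum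
  calc 1 - c ≤ 1 - c * ∑ i ∈ s, f i := sub_le_sub_left (mul_le_of_le_one_right hc₀ hsum) 1
    _ = 1 - ∑ i ∈ s, c * f i := by rw [Finset.mul_sum]
    _ ≤ ∏ i ∈ s, (1 - c * f i) :=
      one_sub_sum_le_prod_one_sub s _ (fun i hi ↦ mul_nonneg hc₀ (hf i hi))
        fun i hi ↦ mul_le_one₀ hc₁ (hf i hi) (le_one i hi)

theorem one_sub_pow_card_le_prod_prod_one_sub_mul {c : R} (hc₀ : 0 ≤ c) (hc₁ : c ≤ 1)
    (s : Finset ι) (t : ι → Finset κ) (f : ι → κ → R) (hf : ∀ i ∈ s, ∀ j ∈ t i, 0 ≤ f i j)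
    (hsum : ∀ i ∈ s, ∑ j ∈ t i, f i j ≤ 1) :
    (1 - c) ^ s.card ≤ ∏ i ∈ s, ∏ j ∈ t i, (1 - c * f i j) := by
  rw [← Finset.prod_const]
  exact Finset.prod_le_prod (fun _ _ ↦ sub_nonneg.2 hc₁) fun i hi ↦
    one_sub_le_prod_one_sub_mul hc₀ hc₁ (t i) (f i) (hf i hi) (hsum i hi)

end OrderedRing

theorem integral_sub_mul_pow (a b d : ℝ) {c : ℝ} (hc : c ≠ 0) (n : ℕ) :
    ∫ t in a..b, (d - c * t) ^ n
      = ((d - c * a) ^ (n + 1) - (d - c * b) ^ (n + 1)) / (c * (n + 1)) := by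
  rw [intervalIntegral.integral_comp_sub_mul (fun u ↦ u ^ n) hc, integral_pow, smul_eq_mul]
  field_simp

/-- Deterministic core of the warm-up hypergraph-matching guarantee: for an
integer `k ≥ 1`, `α ∈ (0,1]`, a finite set `V` of size `k`, and for each
`v ∈ V` a finite family `(x v f)_{f ∈ F v}` of reals in `[0,1]` with
`∑_{f ∈ F v} x v f ≤ 1`,
`∫_0^1 ∏_{v ∈ V} ∏_{f ∈ F v} (1 - t * α * x v f) dt
  ≥ (1 - (1-α)^(k+1)) / (α * (k+1))`. -/
theorem integral_prod_prod_ge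
    {ι ι' : Type*} (k : ℕ) (hk : 1 ≤ k) (α : ℝ) (hα : α ∈ Set.Ioc (0:ℝ) 1)
    (V : Finset ι) (hV : V.card = k)
    (F : ι → Finset ι') (x : ι → ι' → ℝ)
    (hx0 : ∀ v ∈ V, ∀ f ∈ F v, 0 ≤ x v f)
    (hx1 : ∀ v ∈ V, ∀ f ∈ F v, x v f ≤ 1)
    (hsum : ∀ v ∈ V, ∑ f ∈ F v, x v f ≤ 1) :
    (∫ t in (0:ℝ)..1, ∏ v ∈ V, ∏ f ∈ F v, (1 - t * α * x v f))
      ≥ (1 - (1 - α) ^ (k + 1)) / (α * (k + 1)) := by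
  obtain ⟨hα₀, hα₁⟩ := hα
  have pointwise : ∀ t ∈ Set.Icc (0 : ℝ) 1,
      (1 - α * t) ^ k ≤ ∏ v ∈ V, ∏ f ∈ F v, (1 - t * α * x v f) := by
    rintro t ⟨ht₀, ht₁⟩
    rw [mul_comm α t, ← hV]
    exact one_sub_pow_card_le_prod_prod_one_sub_mul (mul_nonneg ht₀ hα₀.le)
      (mul_le_one₀ ht₁ hα₀.le hα₁) V F x hx0 hsum
  calc (1 - (1 - α) ^ (k + 1)) / (α * (k + 1))
      = ∫ t in (0 : ℝ)..1, (1 - α * t) ^ k := by simp [integral_sub_mul_pow 0 1 1 hα₀.ne' k]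
    _ ≤ ∫ t in (0 : ℝ)..1, ∏ v ∈ V, ∏ f ∈ F v, (1 - t * α * x v f) :=
      intervalIntegral.integral_mono_on zero_le_one
        (Continuous.intervalIntegrable (by fun_prop) 0 1)
        (Continuous.intervalIntegrable (by fun_prop) 0 1) pointwise
end

section
/- For all real numbers α₁ ≥ 0, α₂ ≥ 0 and β₁ with 0 ≤ β₁ ≤ α₁(1 − α₁/2), it holds that β₁ + α₂(1 − β₁ − α₂/2) ≤ 5/8. Moreover, equality is attained at α₁ = 1, β₁ = 1/2, α₂ = 1/2. -/
/-! For fixed `c`, the concave quadratic `x * (c - x / 2)` is maximal at `x = c`, with value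
`c ^ 2 / 2`. Taking `c = 1` bounds the first chance by `1 / 2`, and taking `c = 1 - β₁` bounds the
total by `β₁ + (1 - β₁) ^ 2 / 2`, in which the linear terms in `β₁` cancel. -/

section OrderedField

variable {K : Type*} [Field K] [LinearOrder K] [IsStrictOrderedRing K]

theorem mul_sub_half_le_sq_div_two (c x : K) : x * (c - x / 2) ≤ c ^ 2 / 2 := by
  linarith [two_mul_le_add_sq x c]

theorem add_mul_one_sub_sub_half_le_one_add_sq_div_two (α β : K) :
    β + α * (1 - β - α / 2) ≤ (1 + β ^ 2) / 2 :=
  calc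
    β + α * (1 - β - α / 2) ≤ β + (1 - β) ^ 2 / 2 := by
      gcongr
      exact mul_sub_half_le_sq_div_two (1 - β) α
    _ = (1 + β ^ 2) / 2 := by ring

theorem two_chance_opt_general :
    (∀ α₁ α₂ β₁ : K, -(1 / 2) ≤ β₁ → β₁ ≤ α₁ * (1 - α₁ / 2) →
        β₁ + α₂ * (1 - β₁ - α₂ / 2) ≤ 5 / 8)
    ∧ ((1 : K) / 2 + (1 / 2) * (1 - 1 / 2 - (1 / 2) / 2) = 5 / 8) := by
  refine ⟨fun α₁ α₂ β₁ hβ_lower hβ_first ↦ ?_, by norm_num⟩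
  have hβ_upper : β₁ ≤ 1 / 2 := by
    simpa using hβ_first.trans (mul_sub_half_le_sq_div_two 1 α₁)
  calc
    β₁ + α₂ * (1 - β₁ - α₂ / 2) ≤ (1 + β₁ ^ 2) / 2 :=
      add_mul_one_sub_sub_half_le_one_add_sq_div_two α₂ β₁
    _ ≤ (1 + (1 / 2) ^ 2) / 2 := by
      have hβ_sq : β₁ ^ 2 ≤ (1 / 2) ^ 2 := sq_le_sq' hβ_lower hβ_upper
      gcongr
    _ = 5 / 8 := by norm_num

end OrderedField

/-- The optimization problem determining the `(8/5)k` ratio of the two-chance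
algorithm for stochastic `k`-set packing: for `α₁, α₂ ≥ 0` and
`0 ≤ β₁ ≤ α₁ (1 - α₁/2)`, one has `β₁ + α₂ (1 - β₁ - α₂/2) ≤ 5/8`, with
equality at `α₁ = 1`, `β₁ = 1/2`, `α₂ = 1/2`. -/
theorem two_chance_opt :
    (∀ α₁ α₂ β₁ : ℝ, 0 ≤ α₁ → 0 ≤ α₂ → 0 ≤ β₁ → β₁ ≤ α₁ * (1 - α₁ / 2) →
        β₁ + α₂ * (1 - β₁ - α₂ / 2) ≤ 5 / 8)
    ∧ ((1:ℝ) / 2 + (1 / 2) * (1 - 1 / 2 - (1 / 2) / 2) = 5 / 8) := by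
  obtain ⟨hle, heq⟩ := two_chance_opt_general (K := ℝ)
  exact ⟨fun α₁ α₂ β₁ _ _ hβ_nonneg ↦ hle α₁ α₂ β₁ (by linarith), heq⟩
end

section
/- Define γ₁ = 1/2 and γ_{t+1} = (1 + γ_t²)/2, and define sequences (α*_t) and (β*_t) recursively by α*_t = 1 − ∑_{t' < t} β*_{t'} and β*_t = (α*_t)²/2 (so β*_t = (1/2)(1 − ∑_{t'<t}β*_{t'})²). Then for all t ≥ 1: (a) 0 ≤ α*_t ≤ 1; (b) β*_t = α*_t·(1 − ∑_{t' < t} β*_{t'} − α*_t/2), so (α*, β*) is feasible for the optimization program; and (c) for every T ≥ 1, ∑_{t=1}^T β*_t = γ_T. -/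
/-!
In terms of the partial sums `S t = β 1 + ⋯ + β t`, the recursion `β (t + 1) = (1 - S t) ^ 2 / 2`
reads `S (t + 1) = S t + (1 - S t) ^ 2 / 2 = (1 + S t ^ 2) / 2`, because the linear terms cancel.
This is the recursion of `γ`, and `S 0 = 0` gives `S 1 = 1 / 2 = γ 1`, so `S = γ`. The map
`x ↦ (1 + x ^ 2) / 2` preserves the unit interval, so every `S t`, and with it
`α (t + 1) = 1 - S t`, stays there.
-/

open Finset

section Field

variable {K : Type*} [Field K] [NeZero (2 : K)]

theorem add_one_sub_sq_div_two (x : K) : x + (1 - x) ^ 2 / 2 = (1 + x ^ 2) / 2 := by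
  field_simp
  ring

theorem sum_Ico_succ_eq_one_add_sq_div_two {β : ℕ → K}
    (hβ : ∀ t ≥ 1, β t = (1 - ∑ s ∈ Ico 1 t, β s) ^ 2 / 2) {t : ℕ} (ht : 1 ≤ t) :
    ∑ s ∈ Ico 1 (t + 1), β s = (1 + (∑ s ∈ Ico 1 t, β s) ^ 2) / 2 := by
  rw [sum_Ico_succ_top ht, hβ t ht, add_one_sub_sq_div_two]

theorem sum_Icc_eq_of_one_add_sq_div_two {β γ : ℕ → K}
    (hβ : ∀ t ≥ 1, β t = (1 - ∑ s ∈ Ico 1 t, β s) ^ 2 / 2)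
    (hγ_one : γ 1 = 1 / 2) (hγ_succ : ∀ t ≥ 1, γ (t + 1) = (1 + γ t ^ 2) / 2)
    {T : ℕ} (hT : 1 ≤ T) : ∑ t ∈ Icc 1 T, β t = γ T := by
  induction T, hT using Nat.le_induction with
  | base => simp [hβ 1 le_rfl, hγ_one]
  | succ T hT ih =>
    rw [← Ico_add_one_right_eq_Icc, sum_Ico_succ_eq_one_add_sq_div_two hβ (by lia),
      Ico_add_one_right_eq_Icc, ih, hγ_succ T hT]

end Field

section LinearOrderedField

variable {K : Type*} [Field K] [LinearOrder K] [IsStrictOrderedRing K]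

theorem one_add_sq_div_two_mem_Icc {x : K} (hx : x ∈ Set.Icc 0 1) :
    (1 + x ^ 2) / 2 ∈ Set.Icc 0 1 := by
  have hx_sq : x ^ 2 ≤ 1 := pow_le_one₀ hx.1 hx.2
  exact ⟨by positivity, by linarith⟩

theorem sum_Ico_mem_Icc {β : ℕ → K}
    (hβ : ∀ t ≥ 1, β t = (1 - ∑ s ∈ Ico 1 t, β s) ^ 2 / 2) {t : ℕ} (ht : 1 ≤ t) :
    ∑ s ∈ Ico 1 t, β s ∈ Set.Icc 0 1 := by
  induction t, ht using Nat.le_induction with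
  | base => simp
  | succ t ht ih =>
    rw [sum_Ico_succ_eq_one_add_sq_div_two hβ ht]
    exact one_add_sq_div_two_mem_Icc ih

end LinearOrderedField

theorem multi_chance_opt_optimal_solution_general {K : Type*} [Field K] [LinearOrder K]
    [IsStrictOrderedRing K] (γ : ℕ → K) (h1 : γ 1 = 1 / 2)
    (hrec : ∀ t ≥ 1, γ (t + 1) = (1 + (γ t) ^ 2) / 2)
    (α β : ℕ → K)
    (hα : ∀ t ≥ 1, α t = 1 - ∑ t' ∈ Finset.Ico 1 t, β t')
    (hβ : ∀ t ≥ 1, β t = (α t) ^ 2 / 2) :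
    (∀ t ≥ 1, 0 ≤ α t ∧ α t ≤ 1)
    ∧ (∀ t ≥ 1, β t = α t * (1 - (∑ t' ∈ Finset.Ico 1 t, β t') - α t / 2))
    ∧ (∀ T ≥ 1, ∑ t ∈ Finset.Icc 1 T, β t = γ T) := by
  have hβ_sum : ∀ t ≥ 1, β t = (1 - ∑ s ∈ Ico 1 t, β s) ^ 2 / 2 := fun t ht ↦ by
    rw [hβ t ht, hα t ht]
  refine ⟨fun t ht ↦ ?_, fun t ht ↦ ?_, fun T hT ↦
    sum_Icc_eq_of_one_add_sq_div_two hβ_sum h1 hrec hT⟩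
  · rw [hα t ht]
    exact Set.Icc.mem_iff_one_sub_mem.mp (sum_Ico_mem_Icc hβ_sum ht)
  · rw [← hα t ht, hβ t ht]
    ring

/-- The recursively defined `α*_t = 1 - ∑_{t'<t} β*_{t'}`, `β*_t = (α*_t)²/2`
satisfy: `0 ≤ α*_t ≤ 1`; feasibility
`β*_t = α*_t (1 - ∑_{t'<t} β*_{t'} - α*_t/2)`; and `∑_{t=1}^T β*_t = γ_T`
where `γ₁ = 1/2`, `γ_{t+1} = (1 + γ_t²)/2`. -/
theorem multi_chance_opt_optimal_solution
    (γ : ℕ → ℝ) (h1 : γ 1 = 1 / 2)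
    (hrec : ∀ t ≥ 1, γ (t + 1) = (1 + (γ t) ^ 2) / 2)
    (α β : ℕ → ℝ)
    (hα : ∀ t ≥ 1, α t = 1 - ∑ t' ∈ Finset.Ico 1 t, β t')
    (hβ : ∀ t ≥ 1, β t = (α t) ^ 2 / 2) :
    (∀ t ≥ 1, 0 ≤ α t ∧ α t ≤ 1)
    ∧ (∀ t ≥ 1, β t = α t * (1 - (∑ t' ∈ Finset.Ico 1 t, β t') - α t / 2))
    ∧ (∀ T ≥ 1, ∑ t ∈ Finset.Icc 1 T, β t = γ T) :=
  multi_chance_opt_optimal_solution_general γ h1 hrec α β hα hβ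
end

section
/- Define γ₁ = 1/2, γ_{t+1} = (1 + γ_t²)/2, α*_t = 1 − ∑_{t' < t} β*_{t'}, and β*_t = (α*_t)²/2. Let k ≥ 1 be a real number and T ≥ 1 an integer, and define β̄_t = β*_t − α*_t·(∑_{t' < t} α*_{t'})/k for t ∈ {1,…,T}. Then: (1) for every t ∈ {1,…,T}, β̄_t ≤ α*_t·(1 − ∑_{t' < t} β̄_{t'} − α*_t/2) − α*_t·(∑_{t' < t} α*_{t'})/k, i.e., (α*, β̄) is feasible for the perturbed program; and (2) ∑_{t=1}^T β̄_t ≥ γ_T − T²/k. -/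
/-!
For a given mass `S` of earlier chances, `x * (1 - S - x / 2)` is maximal at `x = 1 - S`, with value
`(1 - S) ^ 2 / 2`. The parameters `α*`, `β*` make this choice at every chance, so they meet every
constraint of the unperturbed program with equality. Lowering each `β*_t` by its penalty
`α*_t (∑_{t' < t} α*_{t'}) / k` relaxes the later constraints, because the partial sums of `β`
decrease.

For the objective, `α*_{t+1} = α*_t - (α*_t)² / 2`, which is the recursion of `1 - γ_t` shifted by
one. Hence `∑_{t ≤ T} β*_t = 1 - α*_{T+1} = γ_T`, and the total penalty is at most
`(∑_{t ≤ T} α*_t)² / k ≤ T² / k` since every `α*_t` lies in `[0, 1]`.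
-/

theorem Ico_subset_Icc_of_mem_Icc {ι : Type*} [Preorder ι] [LocallyFiniteOrder ι] {a b i : ι}
    (hi : i ∈ Finset.Icc a b) : Finset.Ico a i ⊆ Finset.Icc a b :=
  Finset.Ico_subset_Icc_self.trans (Finset.Icc_subset_Icc_right (Finset.mem_Icc.1 hi).2)

theorem sum_Icc_mul_sum_Ico_le_sq {ι R : Type*} [Preorder ι] [LocallyFiniteOrder ι]
    [Semiring R] [PartialOrder R] [IsOrderedRing R] {a b : ι} {f : ι → R}
    (hf : ∀ i ∈ Finset.Icc a b, 0 ≤ f i) :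
    ∑ i ∈ Finset.Icc a b, f i * ∑ j ∈ Finset.Ico a i, f j ≤ (∑ i ∈ Finset.Icc a b, f i) ^ 2 := by
  rw [sq, Finset.sum_mul]
  gcongr with i hi
  · exact hf i hi
  · exact fun j hj _ ↦ hf j hj
  · exact Ico_subset_Icc_of_mem_Icc hi

variable {K : Type*} [Field K] {T : ℕ} {α β β' p q : ℕ → K}

/-- Feasibility of `(α, β)` for the `T`-chance program, with chances numbered from `1`, whose `t`-th
constraint is tightened by a penalty `p t`. The unperturbed program has `p = 0`, the perturbed
program has `p t = α t * (∑ s ∈ Finset.Ico 1 t, α s) / k`. -/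
structure IsMultiChanceFeasible [LinearOrder K] (T : ℕ) (p α β : ℕ → K) : Prop where
  nonneg : ∀ t ∈ Finset.Icc 1 T, 0 ≤ α t
  le : ∀ t ∈ Finset.Icc 1 T, β t ≤ α t * (1 - ∑ s ∈ Finset.Ico 1 t, β s - α t / 2) - p t

theorem IsMultiChanceFeasible.add_penalty [LinearOrder K] [IsStrictOrderedRing K]
    (h : IsMultiChanceFeasible T q α β)
    (hp : ∀ t ∈ Finset.Icc 1 T, 0 ≤ p t) (hβ' : ∀ t ∈ Finset.Icc 1 T, β' t = β t - p t) :
    IsMultiChanceFeasible T (q + p) α β' where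
  nonneg := h.nonneg
  le t ht := by
    have hsub : Finset.Ico 1 t ⊆ Finset.Icc 1 T := Ico_subset_Icc_of_mem_Icc ht
    have hsum : ∑ s ∈ Finset.Ico 1 t, β' s ≤ ∑ s ∈ Finset.Ico 1 t, β s :=
      Finset.sum_le_sum fun s hs ↦
        (hβ' s (hsub hs)).trans_le (sub_le_self _ (hp s (hsub hs)))
    calc β' t = β t - p t := hβ' t ht
      _ ≤ α t * (1 - ∑ s ∈ Finset.Ico 1 t, β s - α t / 2) - q t - p t := by
        gcongr
        exact h.le t ht
      _ ≤ α t * (1 - ∑ s ∈ Finset.Ico 1 t, β' s - α t / 2) - q t - p t := by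
        gcongr
        exact h.nonneg t ht
      _ = α t * (1 - ∑ s ∈ Finset.Ico 1 t, β' s - α t / 2) - (q + p) t := by
        rw [Pi.add_apply, sub_sub]

/-- The pair `(α*, β*)`: at each chance `t ≥ 1`, the value `α t` maximizes the right-hand side of
the `t`-th constraint of the unperturbed program, and `β t` is that maximum. Values at `0` are
unconstrained. -/
structure IsGreedyMultiChance (α β : ℕ → K) : Prop where
  eq_one_sub_sum : ∀ t ≥ 1, α t = 1 - ∑ s ∈ Finset.Ico 1 t, β s
  eq_sq_div_two : ∀ t ≥ 1, β t = α t ^ 2 / 2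

namespace IsGreedyMultiChance

theorem apply_one (h : IsGreedyMultiChance α β) : α 1 = 1 := by
  simpa using h.eq_one_sub_sum 1 le_rfl

theorem apply_succ (h : IsGreedyMultiChance α β) {t : ℕ} (ht : 1 ≤ t) :
    α (t + 1) = α t - α t ^ 2 / 2 := by
  rw [h.eq_one_sub_sum (t + 1) (by omega), Finset.sum_Ico_succ_top ht, ← sub_sub,
    ← h.eq_one_sub_sum t ht, h.eq_sq_div_two t ht]

theorem sum_Icc (h : IsGreedyMultiChance α β) (T : ℕ) :
    ∑ t ∈ Finset.Icc 1 T, β t = 1 - α (T + 1) := by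
  rw [h.eq_one_sub_sum (T + 1) (by omega), sub_sub_cancel, Finset.Ico_add_one_right_eq_Icc]

variable [LinearOrder K] [IsStrictOrderedRing K]

theorem mem_Icc (h : IsGreedyMultiChance α β) {t : ℕ} (ht : 1 ≤ t) : α t ∈ Set.Icc 0 1 := by
  induction t, ht using Nat.le_induction with
  | base => simp [h.apply_one]
  | succ t ht ih =>
    obtain ⟨h0, h1⟩ := ih
    rw [h.apply_succ ht]
    constructor <;> nlinarith

theorem eq_one_sub_apply_succ (h : IsGreedyMultiChance α β) {γ : ℕ → K} (h1 : γ 1 = 1 / 2)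
    (hrec : ∀ t ≥ 1, γ (t + 1) = (1 + γ t ^ 2) / 2) {t : ℕ} (ht : 1 ≤ t) :
    γ t = 1 - α (t + 1) := by
  induction t, ht using Nat.le_induction with
  | base => rw [h1, h.apply_succ le_rfl, h.apply_one]; norm_num
  | succ t ht ih => rw [hrec t ht, h.apply_succ (by omega : 1 ≤ t + 1), ih]; ring

theorem isMultiChanceFeasible (h : IsGreedyMultiChance α β) (T : ℕ) :
    IsMultiChanceFeasible T 0 α β where
  nonneg _ ht := (h.mem_Icc (Finset.mem_Icc.1 ht).1).1
  le t ht := by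
    have ht1 := (Finset.mem_Icc.1 ht).1
    rw [← h.eq_one_sub_sum t ht1, h.eq_sq_div_two t ht1, Pi.zero_apply]
    apply le_of_eq
    ring

theorem sum_mul_sum_le_sq (h : IsGreedyMultiChance α β) (T : ℕ) :
    ∑ t ∈ Finset.Icc 1 T, α t * ∑ s ∈ Finset.Ico 1 t, α s ≤ (T : K) ^ 2 := by
  have hα : ∀ t ∈ Finset.Icc 1 T, α t ∈ Set.Icc 0 1 := fun t ht ↦ h.mem_Icc (Finset.mem_Icc.1 ht).1
  have hsum : ∑ t ∈ Finset.Icc 1 T, α t ≤ T := by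
    simpa using Finset.sum_le_card_nsmul _ _ 1 fun t ht ↦ (hα t ht).2
  calc ∑ t ∈ Finset.Icc 1 T, α t * ∑ s ∈ Finset.Ico 1 t, α s
      ≤ (∑ t ∈ Finset.Icc 1 T, α t) ^ 2 := sum_Icc_mul_sum_Ico_le_sq fun t ht ↦ (hα t ht).1
    _ ≤ (T : K) ^ 2 := pow_le_pow_left₀ (Finset.sum_nonneg fun t ht ↦ (hα t ht).1) hsum 2

end IsGreedyMultiChance

theorem multi_chance_perturbed_solution_general [LinearOrder K] [IsStrictOrderedRing K]
    (γ : ℕ → K) (h1 : γ 1 = 1 / 2)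
    (hrec : ∀ t ≥ 1, γ (t + 1) = (1 + (γ t) ^ 2) / 2)
    (α β : ℕ → K)
    (hα : ∀ t ≥ 1, α t = 1 - ∑ t' ∈ Finset.Ico 1 t, β t')
    (hβ : ∀ t ≥ 1, β t = (α t) ^ 2 / 2)
    (k : K) (hk : 0 < k) (T : ℕ) (hT : 1 ≤ T)
    (βbar : ℕ → K)
    (hβbar : ∀ t ≥ 1, βbar t = β t - α t * (∑ t' ∈ Finset.Ico 1 t, α t') / k) :
    (∀ t ∈ Finset.Icc 1 T,
        βbar t ≤ α t * (1 - (∑ t' ∈ Finset.Ico 1 t, βbar t') - α t / 2)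
                  - α t * (∑ t' ∈ Finset.Ico 1 t, α t') / k)
    ∧ (∑ t ∈ Finset.Icc 1 T, βbar t ≥ γ T - (T : K) ^ 2 / k) := by
  have h : IsGreedyMultiChance α β := ⟨hα, hβ⟩
  have hβbar' : ∀ t ∈ Finset.Icc 1 T, βbar t = β t - α t * (∑ t' ∈ Finset.Ico 1 t, α t') / k :=
    fun t ht ↦ hβbar t (Finset.mem_Icc.1 ht).1
  have hpenalty : ∀ t ∈ Finset.Icc 1 T, 0 ≤ α t * (∑ t' ∈ Finset.Ico 1 t, α t') / k :=
    fun t ht ↦ div_nonneg (mul_nonneg (h.mem_Icc (Finset.mem_Icc.1 ht).1).1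
      (Finset.sum_nonneg fun s hs ↦ (h.mem_Icc (Finset.mem_Ico.1 hs).1).1)) hk.le
  refine ⟨by simpa using ((h.isMultiChanceFeasible T).add_penalty hpenalty hβbar').le, ?_⟩
  rw [Finset.sum_congr rfl hβbar', Finset.sum_sub_distrib, h.sum_Icc,
    ← h.eq_one_sub_apply_succ h1 hrec hT, ← Finset.sum_div]
  gcongr
  exact h.sum_mul_sum_le_sq T

/-- Perturbed parameters `β̄_t = β*_t - α*_t (∑_{t'<t} α*_{t'})/k` are feasible
for the perturbed `T`-chance program and satisfy
`∑_{t=1}^T β̄_t ≥ γ_T - T²/k`, where `γ₁ = 1/2`, `γ_{t+1} = (1 + γ_t²)/2`,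
`α*_t = 1 - ∑_{t'<t} β*_{t'}`, `β*_t = (α*_t)²/2`. -/
theorem multi_chance_perturbed_solution
    (γ : ℕ → ℝ) (h1 : γ 1 = 1 / 2)
    (hrec : ∀ t ≥ 1, γ (t + 1) = (1 + (γ t) ^ 2) / 2)
    (α β : ℕ → ℝ)
    (hα : ∀ t ≥ 1, α t = 1 - ∑ t' ∈ Finset.Ico 1 t, β t')
    (hβ : ∀ t ≥ 1, β t = (α t) ^ 2 / 2)
    (k : ℝ) (hk : 1 ≤ k) (T : ℕ) (hT : 1 ≤ T)
    (βbar : ℕ → ℝ)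
    (hβbar : ∀ t ≥ 1, βbar t = β t - α t * (∑ t' ∈ Finset.Ico 1 t, α t') / k) :
    (∀ t ∈ Finset.Icc 1 T,
        βbar t ≤ α t * (1 - (∑ t' ∈ Finset.Ico 1 t, βbar t') - α t / 2)
                  - α t * (∑ t' ∈ Finset.Ico 1 t, α t') / k)
    ∧ (∑ t ∈ Finset.Icc 1 T, βbar t ≥ γ T - (T : ℝ) ^ 2 / k) := by
  exact multi_chance_perturbed_solution_general γ h1 hrec α β hα hβ k (by linarith) T hT βbar hβbar
end

section
/- For every real number δ ≥ 0, e^δ / (1+δ)^{1+δ} ≤ exp(−δ²/(2+δ)). Equivalently, δ − (1+δ)·log(1+δ) ≤ −δ²/(2+δ). -/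
theorem exp_div_rpow_le_exp_iff {x : ℝ} (hx : 0 < x) (a y c : ℝ) :
    Real.exp a / x ^ y ≤ Real.exp c ↔ a - y * Real.log x ≤ c := by
  rw [Real.rpow_def_of_pos hx, ← Real.exp_sub, Real.exp_le_exp, mul_comm]

theorem sub_one_add_mul_log_one_add_le {δ : ℝ} (hδ : 0 ≤ δ) :
    δ - (1 + δ) * Real.log (1 + δ) ≤ -(δ ^ 2) / (2 + δ) :=
  calc
    δ - (1 + δ) * Real.log (1 + δ) ≤ δ - (1 + δ) * (2 * δ / (δ + 2)) := by
      gcongr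
      exact Real.le_log_one_add_of_nonneg hδ
    _ = -(δ ^ 2) / (2 + δ) := by
      rw [add_comm 2 δ]
      field_simp
      ring

/-- For every `δ ≥ 0`, `e^δ / (1+δ)^(1+δ) ≤ exp (-δ²/(2+δ))`
(with `(1+δ)^(1+δ)` the real power); equivalently,
`δ - (1+δ) log (1+δ) ≤ -δ²/(2+δ)`. -/
theorem chernoff_exponent_bound (δ : ℝ) (hδ : 0 ≤ δ) :
    Real.exp δ / (1 + δ) ^ (1 + δ) ≤ Real.exp (-(δ ^ 2) / (2 + δ))
    ∧ δ - (1 + δ) * Real.log (1 + δ) ≤ -(δ ^ 2) / (2 + δ) := by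
  have exponent_le := sub_one_add_mul_log_one_add_le hδ
  have base_pos : 0 < 1 + δ := by positivity
  exact ⟨(exp_div_rpow_le_exp_iff base_pos _ _ _).mpr exponent_le, exponent_le⟩
end
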